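/- Let X ∈ [0,1) be non-constant with μ = E[−log X] ∈ (0,∞], and define Ψ(c) = c Λ*(−1/c) for c > 0, where Λ* is the Legendre transform of λ ↦ log E[X^λ]. Then the set {c > 1/μ : Ψ(c) > 1} is non-empty, α_max := inf of this set satisfies 1/μ < α_max < +∞, Ψ is strictly increasing on (1/μ, ∞) ∩ {Ψ < ∞}, and Ψ(c) < 1 for all c ∈ (1/μ, α_max). -/

import Mathlib

open MeasureTheory Filter
open scoped ENNReal Classical

/-- The cumulant generating function `Λ(λ) = log E[e^{λY}]`, valued in `EReal`. -/
noncomputable def cgfE {Ω : Type*} [MeasurableSpace Ω] (P : Measure Ω)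
    (Y : Ω → ℝ) (l : ℝ) : EReal :=
  if Integrable (fun ω => Real.exp (l * Y ω)) P then
    ((Real.log (∫ ω, Real.exp (l * Y ω) ∂P) : ℝ) : EReal) else ⊤

/-- The Fenchel–Legendre transform `Λ*(z) = sup_{λ ∈ ℝ} {λ z − Λ(λ)}`. -/
noncomputable def legendreE {Ω : Type*} [MeasurableSpace Ω] (P : Measure Ω)
    (Y : Ω → ℝ) (z : ℝ) : EReal :=
  ⨆ l : ℝ, ((l * z : ℝ) : EReal) - cgfE P Y l

/-- `Ψ(c) = c Λ*(−1/c)` for the random variable `log X`. -/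
noncomputable def psiE {Ω : Type*} [MeasurableSpace Ω] (P : Measure Ω)
    (X : Ω → ℝ) (c : ℝ) : EReal :=
  (c : EReal) * legendreE P (fun ω => Real.log (X ω)) (-1 / c)

/-- The real-valued log-moment function. -/
noncomputable def LL {Ω : Type*} [MeasurableSpace Ω] (P : Measure Ω) (Y : Ω → ℝ) (l : ℝ) : ℝ :=
  Real.log (∫ ω, Real.exp (l * Y ω) ∂P)

theorem psiE_le_iff {Ω : Type*} [MeasurableSpace Ω] (P : Measure Ω) (X : Ω → ℝ)
    (c : ℝ) (hc : 0 < c) (B : ℝ) :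
    psiE P X c ≤ (B : EReal) ↔
      ∀ l : ℝ, Integrable (fun ω => Real.exp (l * Real.log (X ω))) P →
        -l - c * LL P (fun ω => Real.log (X ω)) l ≤ B := by
  have hc' : (0 : EReal) < (c : EReal) := by exact_mod_cast hc
  unfold psiE
  rw [mul_comm, ← EReal.le_div_iff_mul_le hc' (EReal.coe_ne_top c), ← EReal.coe_div]
  unfold legendreE
  rw [iSup_le_iff]
  refine forall_congr' fun l => ?_
  unfold cgfE
  by_cases h : Integrable (fun ω => Real.exp (l * Real.log (X ω))) P
  · rw [if_pos h, ← EReal.coe_sub, EReal.coe_le_coe_iff, le_div_iff₀ hc]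
    simp only [h, forall_true_left]
    have : (l * (-1 / c) - Real.log (∫ ω, Real.exp (l * Real.log (X ω)) ∂P)) * c
      = -l - c * LL P (fun ω => Real.log (X ω)) l := by
      unfold LL; field_simp
    rw [this]
  · rw [if_neg h]
    simp [h]

section aux
variable {Ω : Type*} [MeasurableSpace Ω] (P : Measure Ω) [IsProbabilityMeasure P]
    (Y : Ω → ℝ) (hY : Measurable Y) (hY0 : ∀ ω, Y ω ≤ 0)

theorem int_of_nonneg {P : Measure Ω} [IsProbabilityMeasure P] {Y : Ω → ℝ} (hY : Measurable Y)
    (hY0 : ∀ ω, Y ω ≤ 0) {l : ℝ} (hl : 0 ≤ l) :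
    Integrable (fun ω => Real.exp (l * Y ω)) P := by
  refine Integrable.of_bound (C := 1) (by fun_prop) (ae_of_all _ fun ω => ?_)
  rw [Real.norm_eq_abs, abs_of_pos (Real.exp_pos _), Real.exp_le_one_iff]
  exact mul_nonpos_of_nonneg_of_nonpos hl (hY0 ω)

theorem LL_zero : LL P Y 0 = 0 := by simp [LL]

theorem F1 {P : Measure Ω} [IsProbabilityMeasure P] {Y : Ω → ℝ} (hY : Measurable Y)
    (hY0 : ∀ ω, Y ω ≤ 0) {μ : ℝ≥0∞} (hμ : μ = ∫⁻ ω, ENNReal.ofReal (- Y ω) ∂P)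
    (hpos : 0 < μ) {l : ℝ} (hl : Integrable (fun ω => Real.exp (l * Y ω)) P) :
    -l - (μ⁻¹).toReal * LL P Y l ≤ 0 := by
  by_cases ht : μ = ⊤
  · have : 0 ≤ l := by
      by_contra! hneg
      have hYi : Integrable (fun ω => - Y ω) P := by
        refine (hl.div_const (-l)).mono' (by fun_prop) (ae_of_all _ fun ω => ?_)
        rw [Real.norm_eq_abs, abs_of_nonneg (by linarith [hY0 ω]), le_div_iff₀ (by linarith)]
        have := Real.add_one_le_exp (l * Y ω)
        linarith
      have h2 := ofReal_integral_eq_lintegral_ofReal hYi (ae_of_all _ fun ω => by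
        simpa using hY0 ω)
      rw [← hμ, ht] at h2
      exact ENNReal.ofReal_ne_top h2
    simp [ht, this]
  · have hm : 0 < μ.toReal := ENNReal.toReal_pos hpos.ne' ht
    have hYi : Integrable (fun ω => - Y ω) P := by
      refine ⟨by fun_prop, ?_⟩
      rw [hasFiniteIntegral_iff_ofReal (ae_of_all _ fun ω => by simpa using hY0 ω), ← hμ]
      exact lt_top_iff_ne_top.2 ht
    have h2 := ofReal_integral_eq_lintegral_ofReal hYi (ae_of_all _ fun ω => by
        simpa using hY0 ω)
    rw [← hμ] at h2
    have h3 : ∫ ω, - Y ω ∂P = μ.toReal := by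
      rw [← h2, ENNReal.toReal_ofReal (integral_nonneg fun ω => by simpa using hY0 ω)]
    rw [ENNReal.toReal_inv]
    set m := μ.toReal with hmdef
    have hle : Real.exp (-(l * m)) ≤ ∫ ω, Real.exp (l * Y ω) ∂P := by
      have h4 : ∫ ω, (Real.exp (-(l * m)) * (1 + l * m) - Real.exp (-(l * m)) * l * (- Y ω)) ∂P
          = Real.exp (-(l * m)) := by
        rw [integral_sub (integrable_const _) (hYi.const_mul _),
          integral_const_mul (Real.exp (-(l * m)) * l), h3, integral_const]
        simp
        ring
      rw [← h4]
      refine integral_mono ((integrable_const _).sub (hYi.const_mul _)) hl fun ω => ?_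
      have h5 := Real.add_one_le_exp (l * Y ω + l * m)
      have h6 : Real.exp (l * Y ω) = Real.exp (-(l * m)) * Real.exp (l * Y ω + l * m) := by
        rw [← Real.exp_add]; congr 1; ring
      have h7 := Real.exp_pos (-(l * m))
      simp only
      rw [h6]
      nlinarith
    have h8 : -(l * m) ≤ LL P Y l := by
      unfold LL
      rw [Real.le_log_iff_exp_le (lt_of_lt_of_le (Real.exp_pos _) hle)]
      exact hle
    have h9 : m⁻¹ * (-(l * m)) ≤ m⁻¹ * LL P Y l := by gcongr
    have h10 : m⁻¹ * (-(l * m)) = -l := by field_simp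
    linarith

theorem inv_lt {μ : ℝ≥0∞} (hpos : 0 < μ) {c : ℝ} (hc : (μ⁻¹).toReal < c) :
    ENNReal.ofReal c⁻¹ < μ := by
  have hc0 : 0 < c := lt_of_le_of_lt ENNReal.toReal_nonneg hc
  rw [ENNReal.ofReal_inv_of_pos hc0, ENNReal.inv_lt_iff_inv_lt]
  rwa [ENNReal.lt_ofReal_iff_toReal_lt (ENNReal.inv_ne_top.2 hpos.ne')]

theorem F2 {P : Measure Ω} [IsProbabilityMeasure P] {Y : Ω → ℝ} (hY : Measurable Y)
    (hY0 : ∀ ω, Y ω ≤ 0) {μ : ℝ≥0∞} (hμ : μ = ∫⁻ ω, ENNReal.ofReal (- Y ω) ∂P)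
    (hpos : 0 < μ) (hP : P {ω | ENNReal.ofReal (- Y ω) < μ} ≠ 0) :
    ∃ c₀ K : ℝ, (μ⁻¹).toReal < c₀ ∧ 0 ≤ K ∧ ∀ l, Integrable (fun ω => Real.exp (l * Y ω)) P →
      -l - c₀ * LL P Y l ≤ K := by
  obtain ⟨u, -, hu, hlim⟩ := exists_seq_strictMono_tendsto' hpos
  have hn : ∃ n, P {ω | ENNReal.ofReal (- Y ω) ≤ u n} ≠ 0 := by
    by_contra! h
    refine hP (measure_mono_null ?_ (measure_iUnion_null h))
    intro ω hω
    obtain ⟨n, hn⟩ := (hlim.eventually (lt_mem_nhds hω)).exists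
    exact Set.mem_iUnion.2 ⟨n, hn.le⟩
  obtain ⟨n, hn⟩ := hn
  obtain ⟨hun0, hunμ⟩ := hu n
  have hut : u n ≠ ⊤ := hunμ.ne_top
  set a := (u n).toReal with ha
  have ha0 : 0 < a := ENNReal.toReal_pos hun0.ne' hut
  set A : Set Ω := {ω | ENNReal.ofReal (- Y ω) ≤ u n} with hA
  have hAm : MeasurableSet A := measurableSet_le (by fun_prop) measurable_const
  have hp : 0 < P.real A := ENNReal.toReal_pos hn (measure_ne_top _ _)
  have hp1 : P.real A ≤ 1 := measureReal_le_one
  have hc0 : (μ⁻¹).toReal < a⁻¹ := by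
    rw [ha, ← ENNReal.toReal_inv]
    exact (ENNReal.toReal_lt_toReal (ENNReal.inv_ne_top.2 hpos.ne')
      (ENNReal.inv_ne_top.2 hun0.ne')).2 (ENNReal.inv_lt_inv.2 hunμ)
  have hK : 0 ≤ - (a⁻¹ * Real.log (P.real A)) := by
    have := Real.log_nonpos hp.le hp1
    have h2 : 0 < a⁻¹ := inv_pos.2 ha0
    nlinarith
  refine ⟨a⁻¹, - (a⁻¹ * Real.log (P.real A)), hc0, hK, fun l hl => ?_⟩
  rcases le_or_gt 0 l with h0 | h0
  · have h1 : Real.exp (-(l * a)) * P.real A ≤ ∫ ω, Real.exp (l * Y ω) ∂P := by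
      have : ∫ ω, A.indicator (fun _ => Real.exp (-(l * a))) ω ∂P
          = Real.exp (-(l * a)) * P.real A := by
        rw [integral_indicator_const _ hAm, smul_eq_mul, mul_comm]
      rw [← this]
      refine integral_mono ((integrable_const _).indicator hAm) hl fun ω => ?_
      refine Set.indicator_apply_le' (fun hω => ?_) (fun _ => (Real.exp_pos _).le)
      have h2 : - Y ω ≤ a := (ENNReal.ofReal_le_iff_le_toReal hut).1 hω
      refine Real.exp_le_exp.2 ?_
      nlinarith
    have h2 : -(l * a) + Real.log (P.real A) ≤ LL P Y l := by
      unfold LL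
      rw [← Real.log_exp (-(l * a)), ← Real.log_mul (Real.exp_pos _).ne' hp.ne']
      exact Real.log_le_log (by positivity) h1
    have h3 := mul_le_mul_of_nonneg_left h2 (inv_pos.2 ha0).le
    have h4 : a⁻¹ * (-(l * a) + Real.log (P.real A)) = -l + a⁻¹ * Real.log (P.real A) := by
      field_simp
    linarith
  · have h1 : 0 ≤ LL P Y l := by
      refine Real.log_nonneg ?_
      have : ∫ ω, (1 : ℝ) ∂P = 1 := by simp
      rw [← this]
      refine integral_mono (integrable_const _) hl fun ω => ?_
      exact Real.one_le_exp (mul_nonneg_of_nonpos_of_nonpos h0.le (hY0 ω))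
    have h2 := F1 hY hY0 hμ hpos hl
    nlinarith

theorem F4 {P : Measure Ω} [IsProbabilityMeasure P] {Y : Ω → ℝ} (hY : Measurable Y)
    (hY0 : ∀ ω, Y ω ≤ 0) {μ : ℝ≥0∞} (hμ : μ = ∫⁻ ω, ENNReal.ofReal (- Y ω) ∂P)
    (hpos : 0 < μ) {c : ℝ} (hc : (μ⁻¹).toReal < c) :
    ∃ l : ℝ, 0 < l ∧ 0 < -l - c * LL P Y l := by
  have hc0 : 0 < c := lt_of_le_of_lt ENNReal.toReal_nonneg hc
  have h1 := inv_lt hpos hc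
  have hlim : Tendsto (fun n : ℕ => ∫⁻ ω, ENNReal.ofReal (min (- Y ω) n) ∂P) atTop
      (nhds μ) := by
    rw [hμ]
    refine lintegral_tendsto_of_tendsto_of_monotone (fun n => by fun_prop)
      (ae_of_all _ fun ω => ?_) (ae_of_all _ fun ω => ?_)
    · intro i j hij
      refine ENNReal.ofReal_le_ofReal (min_le_min le_rfl (by exact_mod_cast hij))
    · refine tendsto_const_nhds.congr' ?_
      filter_upwards [eventually_ge_atTop ⌈- Y ω⌉₊] with n hn
      rw [min_eq_left (Nat.ceil_le.1 hn)]
  obtain ⟨N, hN⟩ := (hlim.eventually (lt_mem_nhds h1)).exists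
  set Z : Ω → ℝ := fun ω => min (- Y ω) N with hZ
  have hZ0 : ∀ ω, 0 ≤ Z ω := fun ω => le_min (by linarith [hY0 ω]) (Nat.cast_nonneg _)
  have hZN : ∀ ω, Z ω ≤ N := fun ω => min_le_right _ _
  have hZm : Measurable Z := by fun_prop
  have hZi : Integrable Z P := by
    refine Integrable.of_bound (C := N) hZm.aestronglyMeasurable (ae_of_all _ fun ω => ?_)
    rw [Real.norm_eq_abs, abs_of_nonneg (hZ0 ω)]
    exact hZN ω
  have h2 : c⁻¹ < ∫ ω, Z ω ∂P := by
    have h3 := ofReal_integral_eq_lintegral_ofReal hZi (ae_of_all _ hZ0)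
    rw [← h3] at hN
    exact (ENNReal.ofReal_lt_ofReal_iff_of_nonneg (inv_pos.2 hc0).le).1 hN
  set d := ∫ ω, Z ω ∂P - c⁻¹ with hd
  have hd0 : 0 < d := by linarith
  set M : ℝ := N + 1 with hM
  have hM0 : 0 < M := by positivity
  obtain ⟨l, hl0, hl1, hl2⟩ : ∃ l : ℝ, 0 < l ∧ l * M ≤ 1 ∧ l * M ^ 2 < d := by
    refine ⟨min (1 / M) (d / (2 * M ^ 2)), by positivity, ?_, ?_⟩
    · rw [← le_div_iff₀ hM0]; exact min_le_left _ _
    · rw [← lt_div_iff₀ (by positivity)]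
      refine lt_of_le_of_lt (min_le_right _ _) ?_
      rw [div_lt_div_iff₀ (by positivity) (by positivity)]
      have : 0 < d * M ^ 2 := by positivity
      linarith
  refine ⟨l, hl0, ?_⟩
  have hYi := int_of_nonneg (P := P) hY hY0 hl0.le
  have h5 : ∫ ω, Real.exp (l * Y ω) ∂P ≤ 1 + l ^ 2 * M ^ 2 - l * ∫ ω, Z ω ∂P := by
    have h6 : ∫ ω, ((1 + l ^ 2 * M ^ 2) - l * Z ω) ∂P = 1 + l ^ 2 * M ^ 2 - l * ∫ ω, Z ω ∂P := by
      rw [integral_sub (integrable_const _) (hZi.const_mul _), integral_const_mul]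
      simp
    rw [← h6]
    refine integral_mono hYi ((integrable_const _).sub (hZi.const_mul _)) fun ω => ?_
    have hZM : Z ω ≤ M := by linarith [hZN ω]
    have h7 : Real.exp (l * Y ω) ≤ Real.exp (-(l * Z ω)) := by
      refine Real.exp_le_exp.2 ?_
      have : Z ω ≤ - Y ω := min_le_left _ _
      nlinarith
    have h8 : l * Z ω ≤ l * M := by gcongr
    have h8' : 0 ≤ l * Z ω := mul_nonneg hl0.le (hZ0 ω)
    have h9 := Real.abs_exp_sub_one_sub_id_le (x := -(l * Z ω)) (by
      rw [abs_neg, abs_of_nonneg h8']; linarith)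
    have h10 := (abs_le.1 h9).2
    have h11 : (l * Z ω) ^ 2 ≤ (l * M) ^ 2 := by gcongr
    simp only
    nlinarith
  have h6 : ∫ ω, Real.exp (l * Y ω) ∂P < Real.exp (-(l * c⁻¹)) := by
    have := Real.add_one_le_exp (-(l * c⁻¹))
    have h7 : l * (l * M ^ 2) < l * d := by gcongr
    have h8 : l * d = l * (∫ ω, Z ω ∂P) - l * c⁻¹ := by rw [hd]; ring
    nlinarith
  have h7 : LL P Y l < -(l * c⁻¹) := by
    unfold LL
    rw [Real.log_lt_iff_lt_exp (integral_exp_pos hYi)]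
    exact h6
  have h8 : c * LL P Y l < c * (-(l * c⁻¹)) := by gcongr
  have h9 : c * (-(l * c⁻¹)) = -l := by field_simp
  linarith

end aux

/-- Properties of `Ψ` for a non-constant `X ∈ [0,1)` with `μ = E[−log X] ∈ (0,∞]`
(interpreting `1/μ = 0` when `μ = ∞`): the set `{c > 1/μ : Ψ(c) > 1}` is non-empty,
its infimum `α_max` satisfies `1/μ < α_max < ∞`, `Ψ` is strictly increasing on
`(1/μ, ∞) ∩ {Ψ < ∞}`, and `Ψ(c) < 1` for all `c ∈ (1/μ, α_max)`. -/
theorem psi_properties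
    {Ω : Type*} [MeasurableSpace Ω] (P : Measure Ω) [IsProbabilityMeasure P]
    (X : Ω → ℝ) (hmeas : Measurable X)
    (hrange : ∀ ω, X ω ∈ Set.Ico (0 : ℝ) 1)
    (hnonconst : ¬ ∃ c : ℝ, ∀ᵐ ω ∂P, X ω = c)
    (μ : ℝ≥0∞) (hμ : μ = ∫⁻ ω, ENNReal.ofReal (- Real.log (X ω)) ∂P)
    (invμ : ℝ) (hinv : invμ = (μ⁻¹).toReal) :
    {c : ℝ | invμ < c ∧ 1 < psiE P X c}.Nonempty ∧
    invμ < sInf {c : ℝ | invμ < c ∧ 1 < psiE P X c} ∧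
    (∀ c₁ c₂ : ℝ, invμ < c₁ → c₁ < c₂ →
      psiE P X c₁ < ⊤ → psiE P X c₂ < ⊤ → psiE P X c₁ < psiE P X c₂) ∧
    (∀ c : ℝ, invμ < c → c < sInf {c : ℝ | invμ < c ∧ 1 < psiE P X c} →
      psiE P X c < 1) := by
  have hlog_inj : ∀ x y : ℝ, x ∈ Set.Ico (0 : ℝ) 1 → y ≤ 0 → Real.log x = y →
      x = if y = 0 then 0 else Real.exp y := by
    intro x y hx hy hxy
    rcases hx.1.eq_or_lt with h | h
    · rw [← h] at hxy ⊢
      rw [if_pos (by simpa using hxy.symm)]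
    · have := Real.log_neg h hx.2
      rw [if_neg (by linarith), ← hxy, Real.exp_log h]
  set Y : Ω → ℝ := fun ω => Real.log (X ω) with hYdef
  have hY : Measurable Y := by fun_prop
  have hY0 : ∀ ω, Y ω ≤ 0 := fun ω => Real.log_nonpos (hrange ω).1 (hrange ω).2.le
  have hμ' : μ = ∫⁻ ω, ENNReal.ofReal (- Y ω) ∂P := hμ
  have hYnc : ∀ y : ℝ, y ≤ 0 → ¬ ∀ᵐ ω ∂P, Y ω = y := by
    intro y hy h
    refine hnonconst ⟨if y = 0 then 0 else Real.exp y, ?_⟩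
    filter_upwards [h] with ω hω
    exact hlog_inj _ _ (hrange ω) hy hω
  have hmY : Measurable fun ω => ENNReal.ofReal (- Y ω) := by fun_prop
  have hpos : 0 < μ := by
    rw [pos_iff_ne_zero]
    intro h0
    rw [hμ', lintegral_eq_zero_iff hmY] at h0
    refine hYnc 0 le_rfl ?_
    filter_upwards [h0] with ω hω
    have := ENNReal.ofReal_eq_zero.1 hω
    linarith [hY0 ω]
  have hP : P {ω | ENNReal.ofReal (- Y ω) < μ} ≠ 0 := by
    intro h0
    have hge : ∀ᵐ ω ∂P, μ ≤ ENNReal.ofReal (- Y ω) := by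
      rw [ae_iff]; simpa using h0
    have hne : μ ≠ ⊤ := by
      intro ht
      obtain ⟨ω, hω⟩ := hge.exists
      rw [ht] at hω
      exact ENNReal.ofReal_ne_top (top_le_iff.1 hω)
    have heq : (fun _ => μ) =ᵐ[P] fun ω => ENNReal.ofReal (- Y ω) := by
      refine ae_eq_of_ae_le_of_lintegral_le hge (by simpa using hne) hmY.aemeasurable ?_
      rw [← hμ']; simp
    refine hYnc (- μ.toReal) (by simp) ?_
    filter_upwards [heq] with ω hω
    have h2 : μ = ENNReal.ofReal (- Y ω) := hω
    rw [h2, ENNReal.toReal_ofReal (by linarith [hY0 ω])]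
    ring
  have hinv0 : 0 ≤ invμ := by rw [hinv]; exact ENNReal.toReal_nonneg
  have f1 : ∀ l, Integrable (fun ω => Real.exp (l * Y ω)) P → -l - invμ * LL P Y l ≤ 0 := by
    intro l hl
    rw [hinv]; exact F1 hY hY0 hμ' hpos hl
  obtain ⟨c₀, K, hc₀, hK, f2⟩ := F2 hY hY0 hμ' hpos hP
  have f4 : ∀ c, invμ < c → ∃ l : ℝ, 0 < l ∧ 0 < -l - c * LL P Y l := by
    intro c hc
    exact F4 hY hY0 hμ' hpos (by rwa [← hinv])
  rw [← hinv] at hc₀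
  have key : ∀ c, invμ < c → ∀ B : ℝ, psiE P X c ≤ (B : EReal) ↔
      ∀ l : ℝ, Integrable (fun ω => Real.exp (l * Y ω)) P → -l - c * LL P Y l ≤ B :=
    fun c hc B => psiE_le_iff P X c (by linarith) B
  have hposPsi : ∀ c, invμ < c → (0 : EReal) < psiE P X c := by
    intro c hc
    by_contra! h
    obtain ⟨l, hl, hl2⟩ := f4 c hc
    have := (key c hc 0).1 (by simpa using h) l (int_of_nonneg hY hY0 hl.le)
    linarith
  have hmono : ∀ c₁ c₂ : ℝ, invμ < c₁ → c₁ < c₂ →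
      psiE P X c₁ < ⊤ → psiE P X c₂ < ⊤ → psiE P X c₁ < psiE P X c₂ := by
    intro c₁ c₂ h1 h12 _ ht
    have h2 := hposPsi c₂ (h1.trans h12)
    obtain ⟨r, hr⟩ : ∃ r : ℝ, psiE P X c₂ = (r : EReal) :=
      ⟨(psiE P X c₂).toReal, (EReal.coe_toReal ht.ne (ne_bot_of_gt h2)).symm⟩
    have hr0 : 0 < r := by rw [hr] at h2; exact_mod_cast h2
    have hb := (key c₂ (h1.trans h12) r).1 hr.le
    have hd : 0 < c₂ - invμ := by linarith
    have h3 : psiE P X c₁ ≤ (((c₁ - invμ) / (c₂ - invμ) * r : ℝ) : EReal) := by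
      rw [key c₁ h1]
      intro l hl
      have e1 := f1 l hl
      have e2 := hb l hl
      rw [div_mul_eq_mul_div, le_div_iff₀ hd]
      have e3 : (-l - c₁ * LL P Y l) * (c₂ - invμ)
        = (c₂ - c₁) * (-l - invμ * LL P Y l) + (c₁ - invμ) * (-l - c₂ * LL P Y l) := by ring
      rw [e3]
      have e4 := mul_le_mul_of_nonneg_left e1 (by linarith : 0 ≤ c₂ - c₁)
      have e5 := mul_le_mul_of_nonneg_left e2 (by linarith : 0 ≤ c₁ - invμ)
      linarith
    refine lt_of_le_of_lt h3 ?_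
    rw [hr, EReal.coe_lt_coe_iff]
    have : (c₁ - invμ) / (c₂ - invμ) < 1 := by rw [div_lt_one hd]; linarith
    nlinarith
  have hne : {c : ℝ | invμ < c ∧ 1 < psiE P X c}.Nonempty := by
    obtain ⟨l, hl, hl2⟩ := f4 (invμ + 1) (by linarith)
    have hL : LL P Y l < 0 := by nlinarith
    obtain ⟨n, hn⟩ := exists_nat_gt ((1 + l) / (- LL P Y l))
    rw [div_lt_iff₀ (by linarith)] at hn
    have hc : invμ < invμ + 1 + n := by
      have : (0 : ℝ) ≤ n := Nat.cast_nonneg n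
      linarith
    refine ⟨invμ + 1 + n, hc, ?_⟩
    by_contra! h
    have := (key _ hc 1).1 (by simpa using h) l (int_of_nonneg hY hY0 hl.le)
    nlinarith
  refine ⟨hne, ?_, hmono, ?_⟩
  · have hstep : 0 < (c₀ - invμ) / (K + 1) := div_pos (by linarith) (by linarith)
    refine lt_of_lt_of_le (b := invμ + (c₀ - invμ) / (K + 1)) (by linarith) ?_
    refine le_csInf hne ?_
    rintro c ⟨hc, hc1⟩
    by_contra! hlt
    refine absurd hc1 (not_lt.2 ?_)
    have := (key c hc 1).2 ?_
    · simpa using this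
    intro l hl
    have e1 := f1 l hl
    have e2 := f2 l hl
    have hle : (c - invμ) * (K + 1) ≤ c₀ - invμ := by
      rw [← le_div_iff₀ (by linarith)]; linarith
    have hcc : c ≤ c₀ := by nlinarith
    have e3 : (-l - c * LL P Y l) * (c₀ - invμ)
      = (c₀ - c) * (-l - invμ * LL P Y l) + (c - invμ) * (-l - c₀ * LL P Y l) := by ring
    have e4 := mul_le_mul_of_nonneg_left e1 (by linarith : 0 ≤ c₀ - c)
    have e5 := mul_le_mul_of_nonneg_left e2 (by linarith : 0 ≤ c - invμ)
    refine le_of_mul_le_mul_right (a := c₀ - invμ) ?_ (by linarith)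
    rw [e3]
    linarith
  · intro c hc hlt
    obtain ⟨c', h1, h2⟩ := exists_between hlt
    have hle : ∀ x, invμ < x → x < sInf {c : ℝ | invμ < c ∧ 1 < psiE P X c} →
        psiE P X x ≤ 1 := by
      intro x hx hxs
      by_contra! h
      exact notMem_of_lt_csInf hxs ⟨invμ, fun y hy => hy.1.le⟩ ⟨hx, h⟩
    have hlt1 : (1 : EReal) < ⊤ := by exact_mod_cast EReal.coe_lt_top 1
    have g1 := hle c hc hlt
    have g2 := hle c' (hc.trans h1) h2
    exact (hmono c c' hc h1 (g1.trans_lt hlt1) (g2.trans_lt hlt1)).trans_le g2
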